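/- Let X and Y be complex Banach spaces, O ⊆ X open, u : O → Y holomorphic on O with sup_{x∈O} ‖u(x)‖_Y ≤ B, and K ⊆ O compact. Assume that for some 0 < p < 1 there exists a sequence (ψ_j)_{j≥1} of elements of X with (‖ψ_j‖_X)_{j≥1} ∈ ℓ_p(ℕ) such that K ⊆ Q := {Σ_{j≥1} z_j ψ_j : z = (z_j)_{j≥1} ∈ U}, where U is the unit polydisc of ℓ_∞(ℕ). Then Σ_{n≥1} [n^t d_n(u(K))_Y]^p n^{−1} < ∞, where t := 1/p − 1. -/

import Mathlib

/-- The Kolmogorov `n`-width of a subset `K` of a complex normed space `X`: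
the infimum over all `n`-dimensional subspaces `W` of `X` of the deviation
`sup_{v ∈ K} inf_{w ∈ W} ‖v - w‖`. -/
noncomputable def kolWidth {X : Type*} [NormedAddCommGroup X] [NormedSpace ℂ X]
    (n : ℕ) (K : Set X) : ℝ :=
  ⨅ W : {W : Submodule ℂ X // Module.finrank ℂ ↥W = n},
    ⨆ x : K, ⨅ w : ↥W.1, ‖(x : X) - (w : X)‖

/-!
The image `u '' K` is again contained in a box `{∑ c_k v_k : |c_k| ≤ 1}` with `(‖v_k‖)` in `ℓ_p`.
Once the `v_k` are ordered by decreasing norm, the span of the first `n` of them shows that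
`d_n (u '' K) ≤ ∑_{k ≥ n} ‖v_k‖`, and a dyadic comparison bounds the `p`-sums of these tails with
weight `n^(-p)` by `∑ ‖v_k‖^p`.

Near `x = ∑ z_j ψ_j`, the box arises from the power series of `u` at `x`. For `z'` close to `z` in
finitely many coordinates, `∑ z'_j ψ_j - x` lies in the box of a rescaled family `φ` with
`∑ ‖φ_j / r‖^p < 1`. Expanding every homogeneous term multilinearly expresses `u` through the
vectors `q_m (φ_{τ 1}, …, φ_{τ m})`, whose `p`-sum is dominated by the geometric series
`∑_m (∑_j ‖φ_j / r‖^p)^m`. The coefficient sequences of the points of `K` form a compact set for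
the product topology, so finitely many such neighbourhoods suffice.

Complex differentiability on an open subset of a Banach space implies analyticity: the Schwarz
lemma bounds the first-order Taylor remainder quadratically, which makes the difference quotients
converge uniformly to the derivative, so that the derivative is differentiable again; Cauchy
estimates then bound all the Taylor coefficients.
-/

open Filter Topology Metric Set

section Widths

theorem exists_le_finrank_eq {𝕜 V : Type*} [Field 𝕜] [AddCommGroup V] [Module 𝕜 V] {n : ℕ}
    (hV : ∃ V₀ : Submodule 𝕜 V, Module.finrank 𝕜 V₀ = n) (W : Submodule 𝕜 V)
    [FiniteDimensional 𝕜 W] (hW : Module.finrank 𝕜 W ≤ n) :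
    ∃ W' : Submodule 𝕜 V, W ≤ W' ∧ Module.finrank 𝕜 W' = n := by
  obtain ⟨V₀, hV₀⟩ := hV
  obtain ⟨d, hd⟩ := Nat.exists_eq_add_of_le hW
  induction d generalizing W with
  | zero => exact ⟨W, le_rfl, by lia⟩
  | succ d ih =>
    have hnot_le : ¬ V₀ ≤ W := fun hle => by
      have := Submodule.finrank_mono hle
      lia
    obtain ⟨v, -, hvW⟩ := SetLike.not_le_iff_exists.1 hnot_le
    have hlt : W < W ⊔ 𝕜 ∙ v :=
      left_lt_sup.2 fun hle => hvW (hle (Submodule.mem_span_singleton_self v))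
    have hdim_lt := Submodule.finrank_lt_finrank_of_lt hlt
    have hdim_le := Submodule.finrank_add_le_finrank_add_finrank W (𝕜 ∙ v)
    have hline : Module.finrank 𝕜 (𝕜 ∙ v) ≤ 1 := by
      simpa using finrank_span_le_card (R := 𝕜) ({v} : Set V)
    obtain ⟨W', hle, hW'⟩ := ih (W ⊔ 𝕜 ∙ v) (by lia) (by lia)
    exact ⟨W', le_sup_left.trans hle, hW'⟩

variable {Y : Type*} [NormedAddCommGroup Y] [NormedSpace ℂ Y]

theorem kolWidth_nonneg (n : ℕ) (S : Set Y) : 0 ≤ kolWidth n S :=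
  Real.iInf_nonneg fun _ => Real.iSup_nonneg fun _ => Real.iInf_nonneg fun _ => norm_nonneg _

theorem kolWidth_le {n : ℕ} {S : Set Y} {ε : ℝ} (hε : 0 ≤ ε) (W : Submodule ℂ Y)
    [FiniteDimensional ℂ W] (hW : Module.finrank ℂ W ≤ n)
    (h : ∀ x ∈ S, ∃ w ∈ W, ‖x - w‖ ≤ ε) : kolWidth n S ≤ ε := by
  rcases isEmpty_or_nonempty {W : Submodule ℂ Y // Module.finrank ℂ W = n} with hn | ⟨V, hV⟩
  · -- With no `n`-dimensional subspace the width is an infimum over `∅`, which is `0`.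
    rwa [kolWidth, Real.iInf_of_isEmpty]
  obtain ⟨W', hWW', hW'⟩ := exists_le_finrank_eq ⟨V, hV⟩ W hW
  refine (ciInf_le ⟨0, ?_⟩ ⟨W', hW'⟩).trans (Real.iSup_le (fun x => ?_) hε)
  · rintro _ ⟨_, rfl⟩
    exact Real.iSup_nonneg fun _ => Real.iInf_nonneg fun _ => norm_nonneg _
  · obtain ⟨w, hw, hxw⟩ := h x x.2
    refine (ciInf_le ⟨0, ?_⟩ ⟨w, hWW' hw⟩).trans hxw
    rintro _ ⟨_, rfl⟩
    exact norm_nonneg _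

end Widths

section Box

variable {Y : Type*} [NormedAddCommGroup Y] [NormedSpace ℂ Y] {ι κ : Type*}

/-- The image `{∑ⱼ cⱼ vⱼ : |cⱼ| ≤ 1}` of the unit polydisc under a family of vectors `v`; the set
`Q` of the theorem is `box ψ`. Only unconditionally convergent sums are admitted. -/
def box (v : κ → Y) : Set Y :=
  {y | ∃ c : κ → ℂ, (∀ j, ‖c j‖ ≤ 1) ∧ HasSum (fun j => c j • v j) y}

-- Where `d j = 0` also `c j = 0`, so the convention `0 / 0 = 0` gives the right coefficient.
theorem mem_box_smul_of_hasSum {v : κ → Y} {c : κ → ℂ} {d : κ → ℝ} {y : Y}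
    (hy : HasSum (fun j => c j • v j) y) (hcd : ∀ j, ‖c j‖ ≤ d j) :
    y ∈ box fun j => (d j : ℂ) • v j := by
  refine ⟨fun j => c j / d j, fun j => ?_, hy.congr_fun fun j => ?_⟩
  · have hd : 0 ≤ d j := (norm_nonneg _).trans (hcd j)
    rw [norm_div, Complex.norm_of_nonneg hd]
    exact div_le_one_of_le₀ (hcd j) hd
  · rcases eq_or_ne (d j) 0 with hd | hd
    · simp [norm_le_zero_iff.1 ((hcd j).trans_eq hd)]
    · rw [smul_smul, div_mul_cancel₀ _ (Complex.ofReal_ne_zero.2 hd)]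

theorem box_subset_box_comp {v : κ → Y} {f : ι → κ} (hf : Function.Injective f)
    (hv : ∀ j ∉ range f, v j = 0) : box v ⊆ box (v ∘ f) := by
  rintro y ⟨c, hc, hy⟩
  exact ⟨c ∘ f, fun i => hc (f i),
    (hf.hasSum_iff fun j hj => by simp [hv j hj]).2 hy⟩

theorem box_subset_box_sumElim_left (v : ι → Y) (w : κ → Y) : box v ⊆ box (Sum.elim v w) := by
  rintro y ⟨c, hc, hy⟩
  have hzero : HasSum (fun j => (0 : κ → ℂ) j • w j) 0 := by simp
  exact ⟨Sum.elim c 0, by simpa using hc, add_zero y ▸ HasSum.sum hy hzero⟩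

theorem box_subset_box_sumElim_right (v : ι → Y) (w : κ → Y) : box w ⊆ box (Sum.elim v w) := by
  rintro y ⟨c, hc, hy⟩
  have hzero : HasSum (fun i => (0 : ι → ℂ) i • v i) 0 := by simp
  exact ⟨Sum.elim 0 c, by simpa using hc, zero_add y ▸ HasSum.sum hzero hy⟩

theorem norm_le_tsum_of_mem_box {v : κ → Y} (hv : Summable fun j => ‖v j‖) {y : Y}
    (hy : y ∈ box v) : ‖y‖ ≤ ∑' j, ‖v j‖ := by
  obtain ⟨c, hc, hy⟩ := hy
  refine hy.norm_le_of_bounded hv.hasSum fun j => ?_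
  rw [norm_smul]
  exact mul_le_of_le_one_left (norm_nonneg _) (hc j)

theorem kolWidth_le_tsum {S : Set Y} {v : ℕ → Y} (hv : Summable fun k => ‖v k‖) (hS : S ⊆ box v)
    (n : ℕ) : kolWidth n S ≤ ∑' k, ‖v (k + n)‖ := by
  classical
  have hspan : Module.finrank ℂ (Submodule.span ℂ (Finset.image v (Finset.range n) : Set Y)) ≤ n :=
    (finrank_span_finset_le_card _).trans (Finset.card_image_le.trans (Finset.card_range n).le)
  refine kolWidth_le (tsum_nonneg fun _ => norm_nonneg _) _ hspan fun x hx => ?_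
  obtain ⟨c, hc, hx⟩ := hS hx
  refine ⟨∑ k ∈ Finset.range n, c k • v k, ?_, ?_⟩
  · refine Submodule.sum_mem _ fun k hk => Submodule.smul_mem _ _ (Submodule.subset_span ?_)
    exact Finset.mem_coe.2 (Finset.mem_image_of_mem v hk)
  · have htail : HasSum (fun k => c (k + n) • v (k + n)) (x - ∑ k ∈ Finset.range n, c k • v k) :=
      (hasSum_nat_add_iff' (f := fun k => c k • v k) n).2 hx
    exact norm_le_tsum_of_mem_box (v := fun k => v (k + n))
      ((summable_nat_add_iff (f := fun k => ‖v k‖) n).2 hv) ⟨_, fun k => hc (k + n), htail⟩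

end Box

section DecreasingRearrangement

variable {κ : Type*} {w : κ → ℝ}

theorem exists_notMem_forall_le_of_tendsto_cofinite [Infinite κ] (hw : ∀ j, 0 ≤ w j)
    (hw_lim : Tendsto w cofinite (𝓝 0)) (s : Finset κ) : ∃ a ∉ s, ∀ b ∉ s, w b ≤ w a := by
  by_cases hpos : ∃ b ∉ s, 0 < w b
  · obtain ⟨b, hbs, hb⟩ := hpos
    have hfin : {j | j ∉ s ∧ w b ≤ w j}.Finite := by
      refine (Filter.eventually_cofinite.1 (hw_lim.eventually (gt_mem_nhds hb))).subset ?_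
      exact fun j hj => not_lt.2 hj.2
    obtain ⟨a, ⟨has, hba⟩, hmax⟩ := exists_max_image _ w hfin ⟨b, hbs, le_rfl⟩
    refine ⟨a, has, fun j hj => ?_⟩
    rcases le_total (w b) (w j) with h | h
    · exact hmax j ⟨hj, h⟩
    · exact h.trans hba
  · push Not at hpos
    obtain ⟨a, ha⟩ := Infinite.exists_notMem_finset s
    exact ⟨a, ha, fun b hb => (hpos b hb).trans (hw a)⟩

-- The greedy choice of a largest remaining weight enumerates every index of positive weight, since
-- the weights chosen tend to zero.
theorem exists_injective_antitone_comp [Infinite κ] (hw : ∀ j, 0 ≤ w j)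
    (hw_lim : Tendsto w cofinite (𝓝 0)) :
    ∃ f : ℕ → κ, Function.Injective f ∧ Antitone (w ∘ f) ∧ ∀ j ∉ range f, w j = 0 := by
  classical
  choose next next_notMem le_next using exists_notMem_forall_le_of_tendsto_cofinite hw hw_lim
  let chosen : ℕ → Finset κ := fun n => (fun s => insert (next s) s)^[n] ∅
  have chosen_succ (n : ℕ) : chosen (n + 1) = insert (next (chosen n)) (chosen n) :=
    Function.iterate_succ_apply' _ n ∅
  have chosen_mono : Monotone chosen :=
    monotone_nat_of_le_succ fun n => (chosen_succ n).symm ▸ Finset.subset_insert _ _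
  have mem_chosen {m n : ℕ} (h : m < n) : next (chosen m) ∈ chosen n :=
    chosen_mono (Nat.succ_le_of_lt h) (by rw [chosen_succ]; exact Finset.mem_insert_self _ _)
  have mem_range_of_mem_chosen (n : ℕ) : ∀ j ∈ chosen n, j ∈ range fun m => next (chosen m) := by
    induction n with
    | zero => simp [chosen]
    | succ n ih =>
      simp only [chosen_succ, Finset.mem_insert]
      rintro j (rfl | hj)
      · exact mem_range_self n
      · exact ih j hj
  have inj : Function.Injective fun n => next (chosen n) :=
    .of_lt_imp_ne fun m n hmn heq =>
      next_notMem (chosen n) (heq ▸ mem_chosen hmn)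
  refine ⟨fun n => next (chosen n), inj, antitone_nat_of_succ_le fun n => ?_, fun j hj => ?_⟩
  · exact le_next _ _ fun hmem => next_notMem (chosen (n + 1)) (chosen_mono n.le_succ hmem)
  · have hle (n : ℕ) : w j ≤ w (next (chosen n)) :=
      le_next _ _ fun hmem => hj (mem_range_of_mem_chosen n j hmem)
    have hlim := hw_lim.comp (Nat.cofinite_eq_atTop ▸ inj.tendsto_cofinite)
    exact (ge_of_tendsto' hlim hle).antisymm (hw j)

end DecreasingRearrangement

section Sequences

theorem summable_of_summable_rpow {ι : Type*} {a : ι → ℝ} {p : ℝ} (hp0 : 0 < p) (hp1 : p ≤ 1)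
    (ha : ∀ i, 0 ≤ a i) (hap : Summable fun i => a i ^ p) : Summable a := by
  have hmem : Memℓp a (ENNReal.ofReal p) := memℓp_gen <| by
    simpa [ENNReal.toReal_ofReal hp0.le, abs_of_nonneg (ha _)] using hap
  simpa [abs_of_nonneg (ha _)] using
    (memℓp_gen_iff (by simp)).1 (hmem.of_exponent_ge (ENNReal.ofReal_le_one.2 hp1))

theorem summable_pow_mul_tsum_nat_add {c : ℕ → ℝ} {q : ℝ} (hq : 1 < q) (hc : ∀ l, 0 ≤ c l)
    (hqc : Summable fun l => q ^ l * c l) : Summable fun i => q ^ i * ∑' l, c (l + i) := by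
  have hq0 : 0 < q := one_pos.trans hq
  have hterm (l i : ℕ) : q ^ i * c (l + i) = q⁻¹ ^ l * (q ^ (i + l) * c (i + l)) := by
    rw [add_comm l i, pow_add, inv_pow]
    field_simp
  have hshift (l : ℕ) : Summable fun i => q ^ (i + l) * c (i + l) :=
    (summable_nat_add_iff (f := fun i => q ^ i * c i) l).2 hqc
  have hprod : Summable fun li : ℕ × ℕ => q ^ li.2 * c (li.1 + li.2) := by
    refine (summable_prod_of_nonneg fun _ => mul_nonneg (by positivity) (hc _)).2 ⟨fun l => ?_, ?_⟩
    · simp only [hterm]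
      exact (hshift l).mul_left _
    · refine .of_nonneg_of_le (fun l => tsum_nonneg fun i => mul_nonneg (by positivity) (hc _))
        (fun l => ?_) ((summable_geometric_of_lt_one (by positivity)
          (inv_lt_one_of_one_lt₀ hq)).mul_right (∑' i, q ^ i * c i))
      simp only [hterm, tsum_mul_left]
      exact mul_le_mul_of_nonneg_left (tsum_comp_le_tsum_of_inj hqc
        (fun i => mul_nonneg (by positivity) (hc i)) (add_left_injective l)) (by positivity)
  simpa only [Prod.swap, tsum_mul_left] using
    ((summable_prod_of_nonneg fun _ => mul_nonneg (pow_nonneg hq0.le _) (hc _)).1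
      hprod.prod_symm).2

theorem le_tsum_nat_add_of_le_add_succ {t d : ℕ → ℝ} (ht : ∀ i, t i ≤ d i + t (i + 1))
    (ht_lim : Tendsto t atTop (𝓝 0)) (hd : Summable d) (i : ℕ) : t i ≤ ∑' l, d (l + i) := by
  have hpartial (N : ℕ) : t i ≤ ∑ l ∈ Finset.range N, d (l + i) + t (N + i) := by
    induction N with
    | zero => simp
    | succ N ih =>
      rw [Finset.sum_range_succ, add_right_comm N 1 i]
      linarith [ht (N + i)]
  have hlim : Tendsto (fun N => ∑ l ∈ Finset.range N, d (l + i) + t (N + i)) atTop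
      (𝓝 (∑' l, d (l + i) + 0)) :=
    ((summable_nat_add_iff i).2 hd).tendsto_sum_tsum_nat.add
      (ht_lim.comp (tendsto_add_atTop_nat i))
  simpa using ge_of_tendsto' hlim hpartial

variable {a : ℕ → ℝ} {p : ℝ}

theorem tsum_nat_add_le_of_antitone (ha : Antitone a) (hsum : Summable a) (n : ℕ) :
    ∑' k, a (k + n) ≤ n * a n + ∑' k, a (k + 2 * n) := by
  have hshift : Summable fun k => a (k + n) := (summable_nat_add_iff n).2 hsum
  have hhead : ∑ k ∈ Finset.range n, a (k + n) ≤ n * a n := by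
    simpa using Finset.sum_le_card_nsmul (Finset.range n) (fun k => a (k + n)) (a n)
      fun k _ => ha (Nat.le_add_left n k)
  calc ∑' k, a (k + n) = ∑ k ∈ Finset.range n, a (k + n) + ∑' k, a (k + n + n) :=
        (hshift.sum_add_tsum_nat_add n).symm
    _ ≤ n * a n + ∑' k, a (k + 2 * n) := by
        simp only [add_assoc, ← two_mul]
        gcongr

theorem summable_two_pow_mul_rpow (hp0 : 0 ≤ p) (ha : Antitone a) (ha0 : ∀ n, 0 ≤ a n)
    (hap : Summable fun n => a n ^ p) : Summable fun l : ℕ => (2 : ℝ) ^ l * a (2 ^ l) ^ p :=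
  (summable_condensed_iff_of_nonneg (fun n => Real.rpow_nonneg (ha0 n) p)
    fun _ n _ hmn => Real.rpow_le_rpow (ha0 n) (ha hmn) hp0).2 hap

theorem rpow_tsum_nat_add_two_pow_le (hp0 : 0 < p) (hp1 : p ≤ 1) (ha : Antitone a)
    (ha0 : ∀ n, 0 ≤ a n) (hap : Summable fun n => a n ^ p) (i : ℕ) :
    (∑' k, a (k + 2 ^ i)) ^ p ≤ ∑' l, (2 ^ (l + i) * a (2 ^ (l + i))) ^ p := by
  have hsum : Summable a := summable_of_summable_rpow hp0 hp1 ha0 hap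
  have hblocks : Summable fun l => (2 ^ l * a (2 ^ l)) ^ p := by
    refine .of_nonneg_of_le (fun l => by have := ha0 (2 ^ l); positivity) (fun l => ?_)
      (summable_two_pow_mul_rpow hp0.le ha ha0 hap)
    rw [Real.mul_rpow (by positivity) (ha0 _)]
    gcongr
    · exact Real.rpow_nonneg (ha0 _) p
    · exact Real.rpow_le_self_of_one_le (one_le_pow₀ one_le_two) hp1
  refine le_tsum_nat_add_of_le_add_succ (t := fun i => (∑' k, a (k + 2 ^ i)) ^ p)
    (d := fun l => (2 ^ l * a (2 ^ l)) ^ p) (fun i => ?_) ?_ hblocks i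
  · refine (Real.rpow_le_rpow (tsum_nonneg fun k => ha0 _) ?_ hp0.le).trans
      (Real.rpow_add_le_add_rpow (mul_nonneg (by positivity) (ha0 _))
        (tsum_nonneg fun k => ha0 _) hp0.le hp1)
    simpa [pow_succ'] using tsum_nat_add_le_of_antitone ha hsum (2 ^ i)
  · simpa [Real.zero_rpow hp0.ne'] using ((tendsto_sum_nat_add a).comp
      (tendsto_pow_atTop_atTop_of_one_lt one_lt_two)).rpow_const (Or.inr hp0.le)

theorem two_pow_eq_mul_rpow (p : ℝ) (l : ℕ) :
    (2 : ℝ) ^ l = ((2 : ℝ) ^ (1 - p)) ^ l * ((2 : ℝ) ^ l) ^ p := by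
  rw [← Real.rpow_natCast ((2 : ℝ) ^ (1 - p)), ← Real.rpow_natCast, ← Real.rpow_mul two_pos.le,
    ← Real.rpow_mul two_pos.le, ← Real.rpow_add two_pos]
  ring_nf

-- A discrete Hardy inequality below exponent one: by Cauchy condensation only the dyadic tails
-- matter, and those are controlled by the subadditivity of `x ↦ x ^ p`.
theorem summable_rpow_neg_mul_tsum_nat_add_rpow (hp0 : 0 < p) (hp1 : p < 1) (ha : Antitone a)
    (ha0 : ∀ n, 0 ≤ a n) (hap : Summable fun n => a n ^ p) :
    Summable fun n : ℕ => (n : ℝ) ^ (-p) * (∑' k, a (k + n)) ^ p := by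
  have hsum : Summable a := summable_of_summable_rpow hp0 hp1.le ha0 hap
  have tail_nonneg (n : ℕ) : 0 ≤ ∑' k, a (k + n) := tsum_nonneg fun k => ha0 _
  have tail_anti : Antitone fun n => ∑' k, a (k + n) := fun m n hmn =>
    Summable.tsum_le_tsum (fun k => ha (by lia)) ((summable_nat_add_iff n).2 hsum)
      ((summable_nat_add_iff m).2 hsum)
  have hblocks : Summable fun l => ((2 : ℝ) ^ (1 - p)) ^ l * (2 ^ l * a (2 ^ l)) ^ p := by
    refine (summable_two_pow_mul_rpow hp0.le ha ha0 hap).congr fun l => ?_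
    rw [Real.mul_rpow (by positivity) (ha0 _), ← mul_assoc, ← two_pow_eq_mul_rpow]
  refine (summable_condensed_iff_of_nonneg
    (fun n => mul_nonneg (by positivity) (Real.rpow_nonneg (tail_nonneg n) p))
    fun m n hm hmn => ?_).1 ?_
  · have : (0 : ℝ) < m := Nat.cast_pos.2 hm
    gcongr ?_ * ?_
    · exact Real.rpow_nonneg (tail_nonneg n) p
    · exact Real.rpow_le_rpow_of_nonpos this (Nat.cast_le.2 hmn) (neg_nonpos.2 hp0.le)
    · exact Real.rpow_le_rpow (tail_nonneg n) (tail_anti hmn) hp0.le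
  · refine .of_nonneg_of_le (fun i => by have := tail_nonneg (2 ^ i); positivity) (fun i => ?_)
      (summable_pow_mul_tsum_nat_add (Real.one_lt_rpow one_lt_two (sub_pos.2 hp1))
        (fun l => Real.rpow_nonneg (mul_nonneg (by positivity) (ha0 _)) p) hblocks)
    have hcancel : (2 : ℝ) ^ i * ((2 : ℝ) ^ i) ^ (-p) = ((2 : ℝ) ^ (1 - p)) ^ i := by
      nth_rw 1 [two_pow_eq_mul_rpow p i]
      rw [Real.rpow_neg (by positivity)]
      field_simp
    rw [Nat.cast_pow, Nat.cast_ofNat, ← mul_assoc, hcancel]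
    gcongr
    exact rpow_tsum_nat_add_two_pow_le hp0 hp1.le ha ha0 hap i

end Sequences

section LpBoxed

variable {Y : Type*} [NormedAddCommGroup Y] [NormedSpace ℂ Y] {p : ℝ} {S T : Set Y} {κ : Type*}

/-- `S` is contained in the box of a sequence of vectors whose norms are in `ℓ_p`. This is the
hypothesis of the theorem on `K`, and it passes to `u '' K`. -/
def IsLpBoxed (p : ℝ) (S : Set Y) : Prop :=
  ∃ v : ℕ → Y, (Summable fun k => ‖v k‖ ^ p) ∧ S ⊆ box v

-- Padding by zeros makes the index set infinite, so that finite families need no separate case.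
theorem exists_antitone_norm_box_subset_box (hp : 0 < p) {v : κ → Y}
    (hv : Summable fun j => ‖v j‖ ^ p) :
    ∃ v' : ℕ → Y, (Antitone fun k => ‖v' k‖) ∧ (Summable fun k => ‖v' k‖ ^ p) ∧
      box v ⊆ box v' := by
  set w : κ ⊕ ℕ → Y := Sum.elim v 0 with hw_def
  have hw : Summable fun j => ‖w j‖ ^ p := by
    refine .sum _ hv ?_
    simp [hw_def, Function.comp_def, Real.zero_rpow hp.ne']
  have hw_lim : Tendsto (fun j => ‖w j‖) cofinite (𝓝 0) := by
    simpa [Real.rpow_rpow_inv (norm_nonneg _) hp.ne', Real.zero_rpow (inv_ne_zero hp.ne')] using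
      hw.tendsto_cofinite_zero.rpow_const (p := p⁻¹) (Or.inr (inv_nonneg.2 hp.le))
  obtain ⟨f, f_inj, f_anti, hf⟩ :=
    exists_injective_antitone_comp (fun j => norm_nonneg (w j)) hw_lim
  exact ⟨w ∘ f, f_anti, hw.comp_injective f_inj, (box_subset_box_sumElim_left v 0).trans
    (box_subset_box_comp f_inj fun j hj => norm_eq_zero.1 (hf j hj))⟩

theorem isLpBoxed_of_subset_box (hp : 0 < p) {v : κ → Y} (hv : Summable fun j => ‖v j‖ ^ p)
    (hS : S ⊆ box v) : IsLpBoxed p S :=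
  let ⟨v', _, hv', hbox⟩ := exists_antitone_norm_box_subset_box hp hv
  ⟨v', hv', hS.trans hbox⟩

namespace IsLpBoxed

theorem empty (hp : 0 < p) : IsLpBoxed p (∅ : Set Y) :=
  isLpBoxed_of_subset_box (v := (0 : Empty → Y)) hp .of_finite (empty_subset _)

theorem mono (hST : S ⊆ T) (hT : IsLpBoxed p T) : IsLpBoxed p S :=
  let ⟨v, hv, hTv⟩ := hT
  ⟨v, hv, hST.trans hTv⟩

theorem union (hp : 0 < p) (hS : IsLpBoxed p S) (hT : IsLpBoxed p T) : IsLpBoxed p (S ∪ T) := by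
  obtain ⟨v, hv, hSv⟩ := hS
  obtain ⟨w, hw, hTw⟩ := hT
  exact isLpBoxed_of_subset_box (v := Sum.elim v w) hp (.sum _ hv hw)
    (union_subset (hSv.trans (box_subset_box_sumElim_left v w))
      (hTw.trans (box_subset_box_sumElim_right v w)))

theorem summable_kolWidth (hp0 : 0 < p) (hp1 : p < 1) (hS : IsLpBoxed p S) :
    Summable fun n : ℕ => ((n + 1 : ℝ) ^ (1 / p - 1) * kolWidth (n + 1) S) ^ p / (n + 1) := by
  obtain ⟨v₀, hv₀, hSv₀⟩ := hS
  obtain ⟨v, v_anti, hv, hv₀v⟩ := exists_antitone_norm_box_subset_box hp0 hv₀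
  have hv1 : Summable fun k => ‖v k‖ :=
    summable_of_summable_rpow hp0 hp1.le (fun _ => norm_nonneg _) hv
  have hbound := (summable_nat_add_iff 1).2
    (summable_rpow_neg_mul_tsum_nat_add_rpow hp0 hp1 v_anti (fun _ => norm_nonneg _) hv)
  refine .of_nonneg_of_le (fun n => ?_) (fun n => ?_) hbound
  · have := kolWidth_nonneg (n + 1) S
    positivity
  · have hn : (0 : ℝ) < n + 1 := by positivity
    have hpow : ((n + 1 : ℝ) ^ (1 / p - 1)) ^ p / (n + 1) = (n + 1 : ℝ) ^ (-p) := by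
      rw [← Real.rpow_mul hn.le, ← Real.rpow_sub_one hn.ne']
      congr 1
      field_simp
      ring
    rw [Real.mul_rpow (by positivity) (kolWidth_nonneg _ _), mul_div_right_comm, hpow,
      Nat.cast_add_one]
    gcongr
    · exact kolWidth_nonneg _ _
    · exact kolWidth_le_tsum hv1 (hSv₀.trans hv₀v) (n + 1)

end IsLpBoxed

end LpBoxed

theorem exists_ball_subset_forall_norm_le {X Y : Type*} [PseudoMetricSpace X]
    [SeminormedAddCommGroup Y] {f : X → Y} {O : Set X} {x : X} (hO : IsOpen O)
    (hf : ContinuousOn f O) (hx : x ∈ O) :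
    ∃ r > 0, ∃ M, ball x r ⊆ O ∧ ∀ y ∈ ball x r, ‖f y‖ ≤ M := by
  have hnear : ∀ᶠ y in 𝓝 x, y ∈ O ∧ ‖f y‖ ≤ ‖f x‖ + 1 := by
    have hcont := (hf.continuousAt (hO.mem_nhds hx)).norm
    filter_upwards [hO.mem_nhds hx, hcont.eventually_lt_const (lt_add_one _)] with y hyO hy
    exact ⟨hyO, hy.le⟩
  obtain ⟨r, hr, hball⟩ := Metric.eventually_nhds_iff_ball.1 hnear
  exact ⟨r, hr, _, fun y hy => (hball y hy).1, fun y hy => (hball y hy).2⟩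

section Holomorphic

variable {X Y Z : Type*} [NormedAddCommGroup X] [NormedSpace ℂ X]
  [NormedAddCommGroup Y] [NormedSpace ℂ Y] [NormedAddCommGroup Z] [NormedSpace ℂ Z]
  {f : X → Y} {x : X} {r M : ℝ} {O : Set X}

theorem norm_fderiv_le_of_forall_mem_ball_norm_le (hr : 0 < r)
    (hf : DifferentiableOn ℂ f (ball x r)) (hM : ∀ y ∈ ball x r, ‖f y‖ ≤ M) :
    ‖fderiv ℂ f x‖ ≤ 2 * M / r := by
  refine Complex.norm_fderiv_le_div_of_mapsTo_ball hf (fun y hy => ?_) hr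
  rw [mem_closedBall, dist_eq_norm]
  linarith [norm_sub_le (f y) (f x), hM y hy, hM x (mem_ball_self hr)]

-- The Schwarz lemma for the map `f` with its first-order Taylor polynomial removed.
theorem norm_sub_sub_fderiv_le (hf : DifferentiableOn ℂ f (ball x r))
    (hM : ∀ y ∈ ball x r, ‖f y‖ ≤ M) {k : X} (hk : ‖k‖ < r) :
    ‖f (x + k) - f x - fderiv ℂ f x k‖ ≤ 4 * M * (‖k‖ / r) ^ 2 := by
  have hr : 0 < r := (norm_nonneg k).trans_lt hk
  have hfx : HasFDerivAt f (fderiv ℂ f x) x :=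
    (hf.differentiableAt (ball_mem_nhds x hr)).hasFDerivAt
  have hDf : ‖fderiv ℂ f x‖ * r ≤ 2 * M :=
    (le_div_iff₀ hr).1 (norm_fderiv_le_of_forall_mem_ball_norm_le hr hf hM)
  let g : X → Y := fun z => f z - fderiv ℂ f x (z - x)
  have hg (z : X) : g z - g x = f z - f x - fderiv ℂ f x (z - x) := by simp [g, sub_right_comm]
  have hgd : DifferentiableOn ℂ g (ball x r) :=
    hf.sub ((fderiv ℂ f x).differentiable.comp (differentiable_id.sub_const x)).differentiableOn
  have hmaps : MapsTo g (ball x r) (closedBall (g x) (4 * M)) := fun z hz => by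
    have hz' : ‖z - x‖ ≤ r := (mem_ball_iff_norm.1 hz).le
    rw [mem_closedBall, dist_eq_norm, hg]
    have h₁ := norm_sub_le (f z - f x) (fderiv ℂ f x (z - x))
    have h₂ := norm_sub_le (f z) (f x)
    have h₃ := ((fderiv ℂ f x).le_opNorm (z - x)).trans
      (mul_le_mul_of_nonneg_left hz' (norm_nonneg _))
    linarith [hM z hz, hM x (mem_ball_self hr)]
  have hlittle : (fun z => g z - g x) =o[𝓝 x] fun z => ‖z - x‖ ^ 1 := by
    simpa only [hg, pow_one] using hfx.isLittleO.norm_right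
  simpa [dist_eq_norm, hg] using Complex.dist_le_mul_div_pow_of_mapsTo_ball_of_isLittleO
    hgd hmaps hlittle (z := x + k) (by simpa using hk)

section UniformLimit

variable {ι : Type*} {l : Filter ι} {F : ι → X → Y} {g : X → Y}

theorem uniformCauchySeqOn_fderiv (hF : UniformCauchySeqOn F l (ball x (2 * r)))
    (hd : ∀ᶠ n in l, DifferentiableOn ℂ (F n) (ball x (2 * r))) (hr : 0 < r) :
    UniformCauchySeqOn (fun n => fderiv ℂ (F n)) l (ball x r) := by
  intro u hu
  obtain ⟨ε, hε, hεu⟩ := Metric.mem_uniformity_dist.1 hu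
  filter_upwards [hF _ (Metric.dist_mem_uniformity (show 0 < ε / 4 * r by positivity)),
    hd.prod_mk hd] with ⟨m, n⟩ hclose ⟨hm, hn⟩ y hy
  have hsub : ball y r ⊆ ball x (2 * r) := ball_subset_ball' (by linarith [mem_ball.1 hy])
  have hy' : ball x (2 * r) ∈ 𝓝 y := isOpen_ball.mem_nhds (hsub (mem_ball_self hr))
  refine hεu ?_
  rw [dist_eq_norm, ← fderiv_fun_sub (hm.differentiableAt hy') (hn.differentiableAt hy')]
  calc ‖fderiv ℂ (fun z => F m z - F n z) y‖ ≤ 2 * (ε / 4 * r) / r :=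
        norm_fderiv_le_of_forall_mem_ball_norm_le hr ((hm.sub hn).mono hsub) fun z hz =>
          (dist_eq_norm (F m z) (F n z)).ge.trans (hclose z (hsub hz)).le
    _ = ε / 2 := by field_simp; norm_num
    _ < ε := half_lt_self hε

theorem differentiableOn_of_tendstoUniformlyOn [CompleteSpace Y] [l.NeBot] (hO : IsOpen O)
    (hF : TendstoUniformlyOn F g l O) (hd : ∀ᶠ n in l, DifferentiableOn ℂ (F n) O) :
    DifferentiableOn ℂ g O := by
  intro x hx
  obtain ⟨s, hs, hsO⟩ := Metric.isOpen_iff.1 hO x hx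
  obtain ⟨r, hr, rfl⟩ : ∃ r > 0, s = 2 * r := ⟨s / 2, half_pos hs, by ring⟩
  have hcauchy := uniformCauchySeqOn_fderiv (hF.mono hsO).uniformCauchySeqOn
    (hd.mono fun n hn => hn.mono hsO) hr
  choose! g' hg' using fun y (hy : y ∈ ball x r) => cauchy_map_iff_exists_tendsto.1
    (hcauchy.cauchy_map hy)
  have hunif := hcauchy.tendstoUniformlyOn_of_tendsto hg'
  refine (hasFDerivAt_of_tendstoUniformlyOnFilter (f := F) (f' := fun n => fderiv ℂ (F n))
    (g' := g') (l := l) ?_ ?_ ?_).differentiableAt.differentiableWithinAt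
  · exact (tendstoUniformlyOn_iff_tendstoUniformlyOnFilter.1 hunif).mono_right
      (le_principal_iff.2 (ball_mem_nhds x hr))
  · filter_upwards [hd.prod_mk (hO.mem_nhds hx)] with ⟨n, y⟩ ⟨hn, hy⟩
    exact (hn.differentiableAt (hO.mem_nhds hy)).hasFDerivAt
  · filter_upwards [hO.mem_nhds hx] with y hy using hF.tendsto_at hy

end UniformLimit

theorem eventually_norm_smul_lt (hr : 0 < r) (k : X) : ∀ᶠ t : ℂ in 𝓝[≠] 0, ‖t • k‖ < r := by
  have hcont : Continuous fun t : ℂ => ‖t • k‖ := by fun_prop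
  exact nhdsWithin_le_nhds (hcont.continuousAt.eventually_lt continuousAt_const (by simpa using hr))

theorem tendstoUniformlyOn_slope_fderiv (hr : 0 < r) (hf : DifferentiableOn ℂ f (ball x (2 * r)))
    (hM : ∀ y ∈ ball x (2 * r), ‖f y‖ ≤ M) (k : X) :
    TendstoUniformlyOn (fun (t : ℂ) y => t⁻¹ • (f (y + t • k) - f y)) (fun y => fderiv ℂ f y k)
      (𝓝[≠] 0) (ball x r) := by
  have hbound : Tendsto (fun t : ℂ => ‖t‖ * (4 * M * (‖k‖ / r) ^ 2)) (𝓝[≠] 0) (𝓝 0) := by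
    have hcont : Continuous fun t : ℂ => ‖t‖ * (4 * M * (‖k‖ / r) ^ 2) := by fun_prop
    exact (hcont.tendsto' 0 0 (by simp)).mono_left nhdsWithin_le_nhds
  rw [Metric.tendstoUniformlyOn_iff]
  intro ε hε
  filter_upwards [eventually_norm_smul_lt hr k, hbound.eventually_lt_const hε,
    self_mem_nhdsWithin] with t ht htε ht0 y hy
  have ht0 : t ≠ 0 := ht0
  have hsub : ball y r ⊆ ball x (2 * r) := ball_subset_ball' (by linarith [mem_ball.1 hy])
  have hrem := norm_sub_sub_fderiv_le (hf.mono hsub) (fun z hz => hM z (hsub hz)) ht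
  calc dist (fderiv ℂ f y k) (t⁻¹ • (f (y + t • k) - f y))
      = ‖t‖⁻¹ * ‖f (y + t • k) - f y - fderiv ℂ f y (t • k)‖ := by
        rw [dist_comm, dist_eq_norm, ← norm_inv, ← norm_smul, smul_sub _ (_ - _), map_smul,
          inv_smul_smul₀ ht0]
    _ ≤ ‖t‖⁻¹ * (4 * M * (‖t • k‖ / r) ^ 2) := by gcongr
    _ = ‖t‖ * (4 * M * (‖k‖ / r) ^ 2) := by
        rw [norm_smul]
        have := norm_ne_zero_iff.2 ht0
        field_simp
    _ < ε := htε

theorem differentiableOn_fderiv_apply [CompleteSpace Y] (hO : IsOpen O)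
    (hf : DifferentiableOn ℂ f O) (k : X) : DifferentiableOn ℂ (fun y => fderiv ℂ f y k) O := by
  intro x hx
  obtain ⟨s, hs, M, hsO, hM⟩ := exists_ball_subset_forall_norm_le hO hf.continuousOn hx
  obtain ⟨r, hr, rfl⟩ : ∃ r > 0, s = 2 * r := ⟨s / 2, half_pos hs, by ring⟩
  have hunif := tendstoUniformlyOn_slope_fderiv hr (hf.mono hsO) hM k
  refine ((differentiableOn_of_tendstoUniformlyOn isOpen_ball hunif ?_).differentiableAt
    (ball_mem_nhds x hr)).differentiableWithinAt
  filter_upwards [eventually_norm_smul_lt hr k] with t ht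
  have hshift : MapsTo (fun y => y + t • k) (ball x r) (ball x (2 * r)) := fun y hy => by
    rw [mem_ball_iff_norm] at hy
    rw [mem_ball_iff_norm, add_sub_right_comm]
    linarith [norm_add_le (y - x) (t • k)]
  exact (((hf.mono hsO).comp (differentiable_id.add_const _).differentiableOn hshift).sub
    ((hf.mono hsO).mono (ball_subset_ball (by linarith)))).const_smul t⁻¹

theorem differentiableOn_of_forall_differentiableOn_apply {D : X → Z →L[ℂ] Y} (hO : IsOpen O)
    (hM : ∀ y ∈ O, ‖D y‖ ≤ M) (hD : ∀ k, DifferentiableOn ℂ (fun y => D y k) O) :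
    DifferentiableOn ℂ D O := by
  intro x hx
  obtain ⟨r, hr, hrO⟩ := Metric.isOpen_iff.1 hO x hx
  have hDx (k : Z) : DifferentiableAt ℂ (fun y => D y k) x :=
    (hD k).differentiableAt (hO.mem_nhds hx)
  have hMk (k : Z) : ∀ y ∈ ball x r, ‖D y k‖ ≤ M * ‖k‖ := fun y hy =>
    (D y).le_of_opNorm_le (hM y (hrO hy)) k
  let L : Z →L[ℂ] X →L[ℂ] Y := LinearMap.mkContinuous
    { toFun := fun k => fderiv ℂ (fun y => D y k) x
      map_add' := fun k k' => by simpa only [map_add] using fderiv_fun_add (hDx k) (hDx k')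
      map_smul' := fun c k => by
        simpa only [map_smul, RingHom.id_apply] using fderiv_fun_const_smul (hDx k) c }
    (2 * M / r) fun k => (norm_fderiv_le_of_forall_mem_ball_norm_le hr ((hD k).mono hrO)
      (hMk k)).trans_eq (by ring)
  have hL : HasFDerivAt D L.flip x := by
    have hM0 : 0 ≤ M := (norm_nonneg _).trans (hM x hx)
    rw [hasFDerivAt_iff_isLittleO_nhds_zero]
    refine Asymptotics.IsBigO.trans_isLittleO (g := fun h : X => ‖h‖ ^ 2)
      (.of_bound (4 * M / r ^ 2) ?_) (Asymptotics.isLittleO_norm_pow_id one_lt_two)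
    filter_upwards [ball_mem_nhds 0 hr] with h hh
    refine ContinuousLinearMap.opNorm_le_bound _ (by positivity) fun k => ?_
    calc ‖D (x + h) k - D x k - fderiv ℂ (fun y => D y k) x h‖
        ≤ 4 * (M * ‖k‖) * (‖h‖ / r) ^ 2 :=
          norm_sub_sub_fderiv_le ((hD k).mono hrO) (hMk k) (mem_ball_zero_iff.1 hh)
      _ = 4 * M / r ^ 2 * ‖‖h‖ ^ 2‖ * ‖k‖ := by
          rw [norm_pow, norm_norm]
          ring
  exact hL.differentiableAt.differentiableWithinAt

variable [CompleteSpace Y]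

theorem differentiableOn_fderiv_of_isOpen (hO : IsOpen O) (hf : DifferentiableOn ℂ f O) :
    DifferentiableOn ℂ (fderiv ℂ f) O := by
  intro x hx
  obtain ⟨s, hs, M, hsO, hM⟩ := exists_ball_subset_forall_norm_le hO hf.continuousOn hx
  obtain ⟨r, hr, rfl⟩ : ∃ r > 0, s = 2 * r := ⟨s / 2, half_pos hs, by ring⟩
  have hbound : ∀ y ∈ ball x r, ‖fderiv ℂ f y‖ ≤ 2 * M / r := fun y hy => by
    have hsub : ball y r ⊆ ball x (2 * r) := ball_subset_ball' (by linarith [mem_ball.1 hy])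
    exact norm_fderiv_le_of_forall_mem_ball_norm_le hr (hf.mono (hsub.trans hsO))
      fun z hz => hM z (hsub hz)
  have happly (k : X) : DifferentiableOn ℂ (fun y => fderiv ℂ f y k) (ball x r) :=
    (differentiableOn_fderiv_apply hO hf k).mono ((ball_subset_ball (by linarith)).trans hsO)
  exact ((differentiableOn_of_forall_differentiableOn_apply isOpen_ball hbound
    happly).differentiableAt (ball_mem_nhds x hr)).differentiableWithinAt

theorem differentiableOn_iteratedFDeriv_of_isOpen (hO : IsOpen O) (hf : DifferentiableOn ℂ f O)
    (m : ℕ) : DifferentiableOn ℂ (iteratedFDeriv ℂ m f) O := by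
  induction m with
  | zero =>
    rw [iteratedFDeriv_zero_eq_comp, LinearIsometryEquiv.comp_differentiableOn_iff]
    exact hf
  | succ m ih =>
    have hfderiv : DifferentiableOn ℂ (fderiv ℂ (iteratedFDeriv ℂ m f)) O :=
      differentiableOn_fderiv_of_isOpen hO ih
    have hcurry := (continuousMultilinearCurryLeftEquiv ℂ (fun _ : Fin (m + 1) => X)
      Y).symm.toContinuousLinearEquiv.toContinuousLinearMap.differentiable
    rw [iteratedFDeriv_succ_eq_comp_left]
    exact hcurry.comp_differentiableOn hfderiv

theorem contDiffOn_of_differentiableOn_of_isOpen (hO : IsOpen O) (hf : DifferentiableOn ℂ f O)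
    (m : ℕ) : ContDiffOn ℂ m f O :=
  contDiffOn_of_differentiableOn (n := m) fun i _ =>
    (differentiableOn_iteratedFDeriv_of_isOpen hO hf i).congr (iteratedFDerivWithin_of_isOpen i hO)

theorem norm_iteratedFDeriv_le_of_forall_mem_ball_norm_le (hr : 0 < r) (m : ℕ)
    (hf : DifferentiableOn ℂ f (ball x ((m + 1) * r)))
    (hM : ∀ y ∈ ball x ((m + 1) * r), ‖f y‖ ≤ M) :
    ‖iteratedFDeriv ℂ m f x‖ ≤ M * (2 / r) ^ m := by
  induction m generalizing x with
  | zero => simpa using hM x (mem_ball_self (by simpa using hr))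
  | succ m ih =>
    have hsub {y : X} (hy : y ∈ ball x r) :
        ball y ((m + 1) * r) ⊆ ball x ((↑(m + 1) + 1) * r) := ball_subset_ball' (by
      push_cast
      linarith [mem_ball.1 hy])
    have hball : ball x r ⊆ ball x ((↑(m + 1) + 1) * r) :=
      ball_subset_ball (le_mul_of_one_le_left hr.le
        (by simpa using (m.cast_add_one_pos (α := ℝ)).le))
    rw [← norm_fderiv_iteratedFDeriv]
    calc ‖fderiv ℂ (iteratedFDeriv ℂ m f) x‖ ≤ 2 * (M * (2 / r) ^ m) / r :=
          norm_fderiv_le_of_forall_mem_ball_norm_le hr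
            ((differentiableOn_iteratedFDeriv_of_isOpen isOpen_ball hf m).mono hball) fun y hy =>
            ih (hf.mono (hsub hy)) fun z hz => hM z (hsub hy hz)
      _ = M * (2 / r) ^ (m + 1) := by ring

theorem iteratedDeriv_comp_add_smul (hO : IsOpen O) (hf : DifferentiableOn ℂ f O) (hx : x ∈ O)
    (h : X) (m : ℕ) :
    iteratedDeriv m (fun t : ℂ => f (x + t • h)) 0 = iteratedFDeriv ℂ m f x fun _ => h := by
  let line : ℂ →L[ℂ] X := ContinuousLinearMap.toSpanSingleton ℂ h
  have hO' : IsOpen ((x + ·) ⁻¹' O) := hO.preimage (by fun_prop)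
  have hline : IsOpen (line ⁻¹' ((x + ·) ⁻¹' O)) := hO'.preimage line.continuous
  have h0 : line 0 ∈ (x + ·) ⁻¹' O := by simpa using hx
  have hshift : ContDiffOn ℂ m (fun y => f (x + y)) ((x + ·) ⁻¹' O) :=
    contDiffOn_of_differentiableOn_of_isOpen hO'
      (hf.comp (differentiable_id.const_add x).differentiableOn fun y hy => hy) m
  have hcomp := line.iteratedFDerivWithin_comp_right hshift hO'.uniqueDiffOn hline.uniqueDiffOn h0
    le_rfl
  rw [iteratedFDerivWithin_of_isOpen m hline h0, iteratedFDerivWithin_of_isOpen m hO' h0,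
    iteratedFDeriv_comp_add_left] at hcomp
  simpa [line, iteratedDeriv_eq_iteratedFDeriv, Function.comp_def] using
    congrArg (fun A => A fun _ => (1 : ℂ)) hcomp

theorem hasSum_taylorSeries_of_mem_ball (hf : DifferentiableOn ℂ f (ball x (2 * r))) {h : X}
    (hh : ‖h‖ < r) :
    HasSum (fun m : ℕ => (m.factorial : ℂ)⁻¹ • iteratedFDeriv ℂ m f x fun _ => h) (f (x + h)) := by
  have hr : 0 < r := (norm_nonneg h).trans_lt hh
  have hline : MapsTo (fun t : ℂ => x + t • h) (ball 0 2) (ball x (2 * r)) := fun t ht => by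
    rw [mem_ball_iff_norm, add_sub_cancel_left, norm_smul]
    exact mul_lt_mul'' (mem_ball_zero_iff.1 ht) hh (norm_nonneg t) (norm_nonneg h)
  have hslice : DifferentiableOn ℂ (fun t : ℂ => f (x + t • h)) (ball 0 2) :=
    hf.comp ((differentiable_id.smul_const h).const_add x).differentiableOn hline
  have htaylor := Complex.hasSum_taylorSeries_on_ball hslice (z := 1) (by simp)
  simpa [iteratedDeriv_comp_add_smul isOpen_ball hf (mem_ball_self (by positivity))] using htaylor

theorem norm_iteratedFDeriv_div_factorial_le (hr : 0 < r) (hf : DifferentiableOn ℂ f (ball x r))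
    (hM : ∀ y ∈ ball x r, ‖f y‖ ≤ M) (m : ℕ) :
    ‖iteratedFDeriv ℂ m f x‖ / m.factorial ≤
      M * Real.exp 1 * (2 * Real.exp 1 / r) ^ m := by
  have hm : (0 : ℝ) < m + 1 := by positivity
  have hr' : (m + 1) * (r / (m + 1)) = r := mul_div_cancel₀ r hm.ne'
  have hM0 : 0 ≤ M := (norm_nonneg _).trans (hM x (mem_ball_self hr))
  have hcauchy := norm_iteratedFDeriv_le_of_forall_mem_ball_norm_le (r := r / (m + 1))
    (div_pos hr hm) m (by rwa [hr']) (by rwa [hr'])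
  calc ‖iteratedFDeriv ℂ m f x‖ / m.factorial
      ≤ M * (2 / (r / (m + 1))) ^ m / m.factorial := by gcongr
    _ = M * (2 / r) ^ m * ((m + 1 : ℝ) ^ m / m.factorial) := by
        rw [← div_mul, mul_pow]
        ring
    _ ≤ M * (2 / r) ^ m * Real.exp (m + 1) := by
        gcongr
        exact Real.pow_div_factorial_le_exp _ hm.le m
    _ = M * Real.exp 1 * (2 * Real.exp 1 / r) ^ m := by
        rw [Real.exp_add, ← Real.exp_one_pow, mul_div_right_comm, mul_pow]
        ring

theorem analyticAt_of_differentiableOn_of_isOpen (hO : IsOpen O) (hf : DifferentiableOn ℂ f O)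
    (hx : x ∈ O) : AnalyticAt ℂ f x := by
  obtain ⟨s, hs, M, hsO, hM⟩ := exists_ball_subset_forall_norm_le hO hf.continuousOn hx
  obtain ⟨ρ, hρ⟩ : ∃ ρ : NNReal, (ρ : ℝ) = s / (2 * Real.exp 1) :=
    CanLift.prf (s / (2 * Real.exp 1)) (by positivity)
  have hρ0 : 0 < ρ := by rw [← NNReal.coe_pos, hρ]; positivity
  have hρs : 2 * (ρ : ℝ) ≤ s := by
    rw [hρ, ← mul_div_assoc, mul_div_mul_left _ _ two_ne_zero]
    exact div_le_self hs.le (Real.one_le_exp zero_le_one)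
  let q : FormalMultilinearSeries ℂ X Y := fun m =>
    (m.factorial : ℂ)⁻¹ • iteratedFDeriv ℂ m f x
  have hradius : (ρ : ENNReal) ≤ q.radius := by
    refine q.le_radius_of_bound (M * Real.exp 1) fun m => ?_
    calc ‖q m‖ * (ρ : ℝ) ^ m = ‖iteratedFDeriv ℂ m f x‖ / m.factorial * (ρ : ℝ) ^ m := by
          simp only [q, norm_smul, norm_inv, Complex.norm_natCast, inv_mul_eq_div]
      _ ≤ M * Real.exp 1 * (2 * Real.exp 1 / s) ^ m * (ρ : ℝ) ^ m := by
          gcongr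
          exact norm_iteratedFDeriv_div_factorial_le hs (hf.mono hsO) hM m
      _ = M * Real.exp 1 := by
          rw [mul_assoc, ← mul_pow, hρ, div_mul_div_cancel₀ hs.ne', div_self (by positivity),
            one_pow, mul_one]
  refine HasFPowerSeriesOnBall.analyticAt (p := q) (r := ρ) ⟨hradius, by simpa using hρ0, ?_⟩
  intro h hh
  exact hasSum_taylorSeries_of_mem_ball (hf.mono ((ball_subset_ball hρs).trans hsO))
    (by simpa using hh)

end Holomorphic

section Expansion

variable {X Y ι κ : Type*} [Fintype κ]

theorem tendsto_piFinset_const_atTop [DecidableEq κ] :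
    Tendsto (fun s : Finset ι => Fintype.piFinset fun _ : κ => s) atTop atTop := by
  classical
  refine tendsto_atTop_finset_of_monotone
    (fun s t hst => Fintype.piFinset_subset _ _ fun _ => hst) fun τ => ⟨Finset.univ.image τ, ?_⟩
  simp

theorem sum_prod_pi_le {g : ι → ℝ} (hg0 : ∀ j, 0 ≤ g j) (hg : Summable g)
    (s : Finset (κ → ι)) : ∑ τ ∈ s, ∏ i, g (τ i) ≤ (∑' j, g j) ^ Fintype.card κ := by
  classical
  have hs : s ⊆ Fintype.piFinset fun i => s.image fun τ => τ i := fun τ hτ =>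
    Fintype.mem_piFinset.2 fun i => Finset.mem_image_of_mem _ hτ
  calc ∑ τ ∈ s, ∏ i, g (τ i)
      ≤ ∑ τ ∈ Fintype.piFinset fun i => s.image fun τ => τ i, ∏ i, g (τ i) :=
        Finset.sum_le_sum_of_subset_of_nonneg hs fun τ _ _ => Finset.prod_nonneg fun i _ => hg0 _
    _ = ∏ i : κ, ∑ j ∈ s.image fun τ => τ i, g j := (Finset.prod_univ_sum _ _).symm
    _ ≤ ∏ _i : κ, ∑' j, g j := Finset.prod_le_prod
        (fun i _ => Finset.sum_nonneg fun j _ => hg0 j) fun i _ => hg.sum_le_tsum _ fun j _ => hg0 j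
    _ = (∑' j, g j) ^ Fintype.card κ := by simp

theorem summable_prod_pi {g : ι → ℝ} (hg0 : ∀ j, 0 ≤ g j) (hg : Summable g) :
    Summable fun τ : κ → ι => ∏ i, g (τ i) :=
  summable_of_sum_le (fun _ => Finset.prod_nonneg fun _ _ => hg0 _) (sum_prod_pi_le hg0 hg)

theorem tsum_prod_pi_le {g : ι → ℝ} (hg0 : ∀ j, 0 ≤ g j) (hg : Summable g) :
    ∑' τ : κ → ι, ∏ i, g (τ i) ≤ (∑' j, g j) ^ Fintype.card κ :=
  (summable_prod_pi hg0 hg).tsum_le_of_sum_le (sum_prod_pi_le hg0 hg)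

theorem summable_sigma_prod_fin {g : ι → ℝ} (hg0 : ∀ j, 0 ≤ g j) (hg : Summable g)
    (hg1 : ∑' j, g j < 1) : Summable fun τ : Σ m : ℕ, Fin m → ι => ∏ i, g (τ.2 i) := by
  have hprod0 (τ : Σ m : ℕ, Fin m → ι) : 0 ≤ ∏ i, g (τ.2 i) := Finset.prod_nonneg fun i _ => hg0 _
  refine (summable_sigma_of_nonneg hprod0).2 ⟨fun m => summable_prod_pi hg0 hg, ?_⟩
  refine .of_nonneg_of_le (fun m => tsum_nonneg fun τ => hprod0 ⟨m, τ⟩) (fun m => ?_)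
    (summable_geometric_of_lt_one (tsum_nonneg hg0) hg1)
  simpa using tsum_prod_pi_le (κ := Fin m) hg0 hg

theorem tsum_le_tsum_rpow {a : ι → ℝ} {p : ℝ} (hp0 : 0 < p) (hp1 : p ≤ 1) (ha : ∀ j, 0 ≤ a j)
    (hap : Summable fun j => a j ^ p) (hap1 : ∑' j, a j ^ p ≤ 1) :
    ∑' j, a j ≤ ∑' j, a j ^ p := by
  refine (summable_of_summable_rpow hp0 hp1 ha hap).tsum_le_tsum (fun j => ?_) hap
  have hj : a j ^ p ≤ 1 := (hap.le_tsum j fun i _ => Real.rpow_nonneg (ha i) p).trans hap1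
  exact Real.self_le_rpow_of_le_one (ha j) 
    (not_lt.1 fun h => (Real.one_lt_rpow h hp0).not_ge hj) hp1

variable [NormedAddCommGroup X] [NormedSpace ℂ X] [NormedAddCommGroup Y] [NormedSpace ℂ Y]

theorem hasSum_prod_smul_apply (A : ContinuousMultilinearMap ℂ (fun _ : κ => X) Y) {φ : ι → X}
    {c : ι → ℂ} {h : X} (hh : HasSum (fun j => c j • φ j) h)
    (hA : Summable fun τ : κ → ι => (∏ i, c (τ i)) • A fun i => φ (τ i)) :
    HasSum (fun τ : κ → ι => (∏ i, c (τ i)) • A fun i => φ (τ i)) (A fun _ => h) := by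
  classical
  have hexpand (s : Finset ι) : A (fun _ => ∑ j ∈ s, c j • φ j) =
      ∑ τ ∈ Fintype.piFinset fun _ : κ => s, (∏ i, c (τ i)) • A fun i => φ (τ i) := by
    rw [A.map_sum_finset (fun _ j => c j • φ j) fun _ => s]
    exact Finset.sum_congr rfl fun τ _ => A.map_smul_univ (fun i => c (τ i)) fun i => φ (τ i)
  have hlim : Tendsto (fun s => A fun _ => ∑ j ∈ s, c j • φ j) atTop (𝓝 (A fun _ => h)) :=
    (A.cont.tendsto _).comp (tendsto_pi_nhds.2 fun _ => hh)
  simp only [hexpand] at hlim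
  rw [← tendsto_nhds_unique (hA.hasSum.comp tendsto_piFinset_const_atTop) hlim]
  exact hA.hasSum

theorem summable_norm_rpow_apply_sigma {q : FormalMultilinearSeries ℂ X Y} {r : NNReal}
    (hr : 0 < r) (hrq : r < q.radius) {p : ℝ} (hp : 0 ≤ p) {φ : ι → X}
    (hφ : Summable fun j => (‖φ j‖ / r) ^ p) (hφ1 : ∑' j, (‖φ j‖ / r) ^ p < 1) :
    Summable fun τ : Σ m : ℕ, Fin m → ι => ‖q τ.1 fun i => φ (τ.2 i)‖ ^ p := by
  obtain ⟨C, hC, hqC⟩ := q.norm_mul_pow_le_of_lt_radius hrq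
  have hbound (τ : Σ m : ℕ, Fin m → ι) :
      ‖q τ.1 fun i => φ (τ.2 i)‖ ≤ C * ∏ i, ‖φ (τ.2 i)‖ / r := by
    calc ‖q τ.1 fun i => φ (τ.2 i)‖ ≤ ‖q τ.1‖ * ∏ i, ‖φ (τ.2 i)‖ := (q τ.1).le_opNorm _
      _ = ‖q τ.1‖ * r ^ τ.1 * ∏ i, ‖φ (τ.2 i)‖ / r := by
          rw [Finset.prod_div_distrib, Finset.prod_const, Finset.card_univ, Fintype.card_fin]
          have hr0 : (r : ℝ) ^ τ.1 ≠ 0 := pow_ne_zero _ (NNReal.coe_ne_zero.2 hr.ne')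
          rw [mul_assoc, mul_div_cancel₀ _ hr0]
      _ ≤ C * ∏ i, ‖φ (τ.2 i)‖ / r := by gcongr; exact hqC τ.1
  refine .of_nonneg_of_le (fun τ => by positivity) (fun τ => ?_)
    ((summable_sigma_prod_fin (fun j => by positivity) hφ hφ1).mul_left (C ^ p))
  calc ‖q τ.1 fun i => φ (τ.2 i)‖ ^ p ≤ (C * ∏ i, ‖φ (τ.2 i)‖ / r) ^ p := by
        gcongr
        exact hbound τ
    _ = C ^ p * ∏ i, (‖φ (τ.2 i)‖ / r) ^ p := by
        rw [Real.mul_rpow hC.le (Finset.prod_nonneg fun i _ => by positivity),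
          Real.finsetProd_rpow _ _ fun i _ => by positivity]

-- Expanding each homogeneous term of the power series at `∑ c j • φ j` gives the monomials
-- `∏ i, c (τ i)`, of modulus at most `1`, as coefficients of the vectors `q m (φ ∘ τ)`.
theorem isLpBoxed_image_add_box [CompleteSpace Y] {f : X → Y} {x : X}
    {q : FormalMultilinearSeries ℂ X Y} {R : ENNReal} (hf : HasFPowerSeriesOnBall f q x R)
    {r : NNReal} (hr : 0 < r) (hrR : r < R) {p : ℝ} (hp0 : 0 < p) (hp1 : p ≤ 1) {φ : ι → X}
    (hφ : Summable fun j => (‖φ j‖ / r) ^ p) (hφ1 : ∑' j, (‖φ j‖ / r) ^ p < 1) :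
    IsLpBoxed p (f '' ((x + ·) '' box φ)) := by
  have hr' : (0 : ℝ) < r := hr
  let v : (Σ m : ℕ, Fin m → ι) → Y := fun τ => q τ.1 fun i => φ (τ.2 i)
  have hv : Summable fun τ => ‖v τ‖ ^ p :=
    summable_norm_rpow_apply_sigma hr (hrR.trans_le hf.r_le) hp0.le hφ hφ1
  refine isLpBoxed_of_subset_box hp0 hv ?_
  rintro _ ⟨_, ⟨h, hh, rfl⟩, rfl⟩
  have hφ0 (j : ι) : 0 ≤ ‖φ j‖ / r := by positivity
  have hsmall : ∑' j, ‖φ j‖ < r := by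
    have := (tsum_le_tsum_rpow hp0 hp1 hφ0 hφ hφ1.le).trans_lt hφ1
    rwa [tsum_div_const, div_lt_one hr'] at this
  have hφs : Summable fun j => ‖φ j‖ :=
    (summable_div_const_iff hr'.ne').1 (summable_of_summable_rpow hp0 hp1 hφ0 hφ)
  have hhR : h ∈ eball (0 : X) R := by
    refine eball_subset_eball hrR.le ?_
    simpa using (norm_le_tsum_of_mem_box hφs hh).trans_lt hsmall
  obtain ⟨c, hc, hch⟩ := hh
  have hmonomial (τ : Σ m : ℕ, Fin m → ι) : ‖∏ i, c (τ.2 i)‖ ≤ 1 := by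
    rw [norm_prod]
    exact Finset.prod_le_one (fun i _ => norm_nonneg _) fun i _ => hc _
  have hsum : Summable fun τ => (∏ i, c (τ.2 i)) • v τ :=
    .of_norm_bounded (summable_of_summable_rpow hp0 hp1 (fun τ => norm_nonneg _) hv) fun τ => by
      rw [norm_smul]
      exact mul_le_of_le_one_left (norm_nonneg _) (hmonomial τ)
  have hterms := hsum.hasSum.sigma fun m => hasSum_prod_smul_apply (q m) hch (hsum.sigma_factor m)
  refine ⟨_, hmonomial, ?_⟩
  rw [(hf.hasSum hhR).unique hterms]
  exact hsum.hasSum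

end Expansion

section Polydisc

variable {X Y ι : Type*}

theorem exists_tsum_rescale_rpow_lt_one [DecidableEq ι] {p : ℝ} (hp : 0 < p) {a : ι → ℝ}
    (ha : ∀ j, 0 ≤ a j) (hap : Summable fun j => a j ^ p) :
    ∃ (s : Finset ι) (δ : ℝ), 0 < δ ∧
      (Summable fun j => ((if j ∈ s then δ else 2) * a j) ^ p) ∧
      ∑' j, ((if j ∈ s then δ else 2) * a j) ^ p < 1 := by
  obtain ⟨s, htail⟩ := ((tendsto_tsum_compl_atTop_zero fun j => (2 * a j) ^ p).eventually_lt_const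
    (half_pos one_pos)).exists
  have hhead : Tendsto (fun δ => ∑ j ∈ s, (δ * a j) ^ p) (𝓝[>] 0) (𝓝 0) := by
    have hcont : Continuous fun δ => ∑ j ∈ s, (δ * a j) ^ p :=
      continuous_finsetSum _ fun j _ => (continuous_mul_const _).rpow_const fun _ => Or.inr hp.le
    exact (hcont.tendsto' 0 0 (by simp [Real.zero_rpow hp.ne'])).mono_left nhdsWithin_le_nhds
  obtain ⟨δ, hδs, hδ⟩ := ((hhead.eventually_lt_const (half_pos one_pos)).and
    self_mem_nhdsWithin).exists
  have hin : ∀ j ∈ s, ((if j ∈ s then δ else 2) * a j) ^ p = (δ * a j) ^ p := fun j hj => by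
    rw [if_pos hj]
  have hout (j : {j // j ∉ s}) : ((if ↑j ∈ s then δ else 2) * a j) ^ p = (2 * a j) ^ p := by
    rw [if_neg j.2]
  have hsum : Summable fun j => ((if j ∈ s then δ else 2) * a j) ^ p := by
    have htwo : Summable fun j => (2 * a j) ^ p := by
      simpa only [Real.mul_rpow zero_le_two (ha _)] using hap.mul_left (2 ^ p)
    exact s.summable_compl_iff.1 ((s.summable_compl_iff.2 htwo).congr fun j => (hout j).symm)
  refine ⟨s, δ, hδ, hsum, ?_⟩
  rw [← hsum.sum_add_tsum_subtype_compl s, Finset.sum_congr rfl hin, tsum_congr hout]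
  linarith

theorem hasSum_iff_forall_norm_sub_sum_le [SeminormedAddCommGroup X] {v : ι → X} {b : ι → ℝ}
    (hb : Summable b) (hvb : ∀ j, ‖v j‖ ≤ b j) {x : X} :
    HasSum v x ↔ ∀ s : Finset ι, ‖x - ∑ j ∈ s, v j‖ ≤ ∑' j : {j // j ∉ s}, b j := by
  refine ⟨fun h s => ?_, fun h => ?_⟩
  · exact ((s.hasSum_compl_iff).2 (by simpa using h)).norm_le_of_bounded
      (s.summable_compl_iff.2 hb).hasSum fun j => hvb j
  · exact tendsto_iff_norm_sub_tendsto_zero.2 (squeeze_zero (fun s => norm_nonneg _)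
      (fun s => norm_sub_rev x _ ▸ h s) (tendsto_tsum_compl_atTop_zero b))

variable [NormedAddCommGroup X] [NormedSpace ℂ X] [NormedAddCommGroup Y] [NormedSpace ℂ Y]

/-- The pairs of a point of `K` and a coefficient sequence in the unit polydisc expanding it
in `ψ`. -/
def boxGraph (ψ : ι → X) (K : Set X) : Set ((ι → ℂ) × X) :=
  {zx | (∀ j, ‖zx.1 j‖ ≤ 1) ∧ zx.2 ∈ K ∧ HasSum (fun j => zx.1 j • ψ j) zx.2}

-- The polydisc is compact in the product topology, and the uniform control of the tails makes
-- convergence of the expansion a closed condition there.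
theorem isCompact_boxGraph {ψ : ι → X} (hψ : Summable fun j => ‖ψ j‖) {K : Set X}
    (hK : IsCompact K) : IsCompact (boxGraph ψ K) := by
  let polydisc : Set (ι → ℂ) := Set.pi univ fun _ => closedBall 0 1
  have hpolydisc : IsCompact polydisc := isCompact_univ_pi fun _ => isCompact_closedBall 0 1
  let tailBounded : Set ((ι → ℂ) × X) :=
    {zx | ∀ s : Finset ι, ‖zx.2 - ∑ j ∈ s, zx.1 j • ψ j‖ ≤ ∑' j : {j // j ∉ s}, ‖ψ j‖}
  have htail : IsClosed tailBounded := by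
    simp only [tailBounded, ofPred_forall]
    exact isClosed_iInter fun s => isClosed_le (by fun_prop) continuous_const
  have hgraph : boxGraph ψ K = polydisc ×ˢ K ∩ tailBounded := by
    ext ⟨z, x⟩
    have hz : z ∈ polydisc ↔ ∀ j, ‖z j‖ ≤ 1 := by simp [polydisc]
    simp only [boxGraph, tailBounded, mem_inter_iff, mem_prod, mem_ofPred_eq, hz, and_assoc]
    refine and_congr_right fun hz1 => and_congr_right fun _ =>
      hasSum_iff_forall_norm_sub_sum_le hψ fun j => ?_
    rw [norm_smul]
    exact mul_le_of_le_one_left (norm_nonneg _) (hz1 j)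
  rw [hgraph]
  exact (hpolydisc.prod hK).inter_right htail

theorem exists_isLpBoxed_image_add_box_rescale [CompleteSpace Y] [DecidableEq ι] {f : X → Y} {x : X}
    (hf : AnalyticAt ℂ f x) {p : ℝ} (hp0 : 0 < p) (hp1 : p ≤ 1) {ψ : ι → X}
    (hψ : Summable fun j => ‖ψ j‖ ^ p) :
    ∃ (s : Finset ι) (δ : ℝ), 0 < δ ∧
      IsLpBoxed p (f '' ((x + ·) '' box fun j => ((if j ∈ s then δ else 2 : ℝ) : ℂ) • ψ j)) := by
  obtain ⟨q, R, hq⟩ := hf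
  obtain ⟨r, hr0, hrR⟩ := ENNReal.lt_iff_exists_nnreal_btwn.1 hq.r_pos
  have hr : 0 < r := by exact_mod_cast hr0
  have hψr : Summable fun j => (‖ψ j‖ / r) ^ p := by
    simpa only [Real.div_rpow (norm_nonneg _) r.coe_nonneg] using hψ.div_const _
  obtain ⟨s, δ, hδ, hsum, hlt⟩ :=
    exists_tsum_rescale_rpow_lt_one hp0 (fun j => by positivity) hψr
  have hnorm (j : ι) : ‖((if j ∈ s then δ else 2 : ℝ) : ℂ) • ψ j‖ / r =
      (if j ∈ s then δ else 2) * (‖ψ j‖ / r) := by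
    rw [norm_smul, Complex.norm_of_nonneg (by split_ifs <;> positivity), mul_div_assoc]
  refine ⟨s, δ, hδ, isLpBoxed_image_add_box hq hr hrR hp0 hp1 ?_ ?_⟩
  · simpa only [hnorm] using hsum
  · simpa only [hnorm] using hlt

-- A neighbourhood in the product topology constrains only finitely many coordinates; these are
-- taken `δ`-close to those of `z`, and all others differ from them by at most `2`.
theorem exists_mem_nhdsWithin_isLpBoxed_image_snd [CompleteSpace Y] {f : X → Y} {p : ℝ}
    (hp0 : 0 < p) (hp1 : p ≤ 1) {ψ : ι → X} (hψ : Summable fun j => ‖ψ j‖ ^ p) {K : Set X}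
    {zx : (ι → ℂ) × X} (hzx : zx ∈ boxGraph ψ K) (hf : AnalyticAt ℂ f zx.2) :
    ∃ T ∈ 𝓝[boxGraph ψ K] zx, IsLpBoxed p (f '' (Prod.snd '' T)) := by
  classical
  obtain ⟨z, x⟩ := zx
  obtain ⟨hz, -, hsum⟩ := hzx
  obtain ⟨s, δ, hδ, hbox⟩ := exists_isLpBoxed_image_add_box_rescale hf hp0 hp1 hψ
  have hnear : ∀ᶠ zx' : (ι → ℂ) × X in 𝓝 (z, x), ∀ j ∈ s, ‖zx'.1 j - z j‖ < δ := by
    refine s.eventually_all.2 fun j _ => ?_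
    have hcont : Continuous fun zx' : (ι → ℂ) × X => ‖zx'.1 j - z j‖ := by fun_prop
    exact hcont.continuousAt.eventually_lt continuousAt_const (by simpa using hδ)
  refine ⟨_, inter_mem_nhdsWithin _ hnear, hbox.mono (image_mono ?_)⟩
  rintro _ ⟨⟨z', x'⟩, ⟨⟨hz', -, hsum'⟩, hclose⟩, rfl⟩
  refine ⟨x' - x, mem_box_smul_of_hasSum (c := z' - z) ?_ fun j => ?_, add_sub_cancel x x'⟩
  · simpa only [Pi.sub_apply, sub_smul] using hsum'.sub hsum
  · split_ifs with hj
    · exact (hclose j hj).le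
    · exact (norm_sub_le _ _).trans (by linarith [hz j, hz' j])

theorem isLpBoxed_image_of_subset_box [CompleteSpace Y] {O : Set X} (hO : IsOpen O) {u : X → Y}
    (hu : DifferentiableOn ℂ u O) {K : Set X} (hK : IsCompact K) (hKO : K ⊆ O)
    {p : ℝ} (hp0 : 0 < p) (hp1 : p ≤ 1) {ψ : ι → X} (hψ : Summable fun j => ‖ψ j‖ ^ p)
    (hKψ : K ⊆ box ψ) : IsLpBoxed p (u '' K) := by
  have hψ1 : Summable fun j => ‖ψ j‖ :=
    summable_of_summable_rpow hp0 hp1 (fun _ => norm_nonneg _) hψ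
  have hgraph : IsLpBoxed p (u '' (Prod.snd '' boxGraph ψ K)) := by
    refine (isCompact_boxGraph hψ1 hK).induction_on
      (p := fun T => IsLpBoxed p (u '' (Prod.snd '' T))) ?_ ?_ ?_ ?_
    · simpa only [image_empty] using IsLpBoxed.empty hp0
    · exact fun S T hST hT => hT.mono (image_mono (image_mono hST))
    · intro S T hS hT
      simpa only [image_union] using hS.union hp0 hT
    · exact fun zx hzx => exists_mem_nhdsWithin_isLpBoxed_image_snd hp0 hp1 hψ hzx
        (analyticAt_of_differentiableOn_of_isOpen hO hu (hKO hzx.2.1))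
  refine hgraph.mono (image_mono fun x hx => ?_)
  obtain ⟨z, hz, hzx⟩ := hKψ hx
  exact ⟨(z, x), ⟨hz, hx, hzx⟩, rfl⟩

end Polydisc

theorem kolWidth_summability_of_lp_box_general
    {X Y ι : Type*} [NormedAddCommGroup X] [NormedSpace ℂ X]
    [NormedAddCommGroup Y] [NormedSpace ℂ Y] [CompleteSpace Y]
    {O : Set X} (hO : IsOpen O) {u : X → Y} (hu : DifferentiableOn ℂ u O)
    {K : Set X} (hK : IsCompact K) (hKO : K ⊆ O) {p : ℝ} (hp0 : 0 < p) (hp1 : p < 1)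
    {ψ : ι → X} (hψ : Summable fun j => ‖ψ j‖ ^ p) (hKψ : K ⊆ box ψ) :
    Summable fun n : ℕ =>
      ((n + 1 : ℝ) ^ (1 / p - 1) * kolWidth (n + 1) (u '' K)) ^ p / (n + 1) :=
  (isLpBoxed_image_of_subset_box hO hu hK hKO hp0 hp1.le hψ hKψ).summable_kolWidth hp0 hp1

/-- **Cohen-DeVore, Theorem 2.1.** Let `X, Y` be complex Banach spaces, `O ⊆ X` open,
`u` holomorphic on `O` and uniformly bounded by `B`, and `K ⊆ O` compact.  Assume that for
some `0 < p < 1` there is a sequence `(ψ_j)_{j ≥ 1}` in `X` with `(‖ψ_j‖)_j ∈ ℓ_p(ℕ)` such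
that `K ⊆ Q = {Σ_j z_j ψ_j : z ∈ U}`, `U` the unit polydisc of `ℓ_∞(ℕ)`.  Then
`Σ_{n ≥ 1} [n^t d_n(u(K))_Y]^p n^{-1} < ∞` where `t := 1/p - 1`.
(Sequences are indexed by `ℕ`, with index `j - 1 ∈ ℕ` corresponding to `j ≥ 1`;
the sum over `n ≥ 1` is written as a sum over `n + 1`, `n ∈ ℕ`.) -/
theorem kolWidth_summability_of_lp_box
    {X Y : Type*} [NormedAddCommGroup X] [NormedSpace ℂ X] [CompleteSpace X]
    [NormedAddCommGroup Y] [NormedSpace ℂ Y] [CompleteSpace Y]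
    (O : Set X) (hO : IsOpen O) (u : X → Y) (hu : DifferentiableOn ℂ u O)
    (B : ℝ) (hB : ∀ x ∈ O, ‖u x‖ ≤ B)
    (K : Set X) (hK : IsCompact K) (hKO : K ⊆ O)
    (p : ℝ) (hp0 : 0 < p) (hp1 : p < 1)
    (ψ : ℕ → X) (hψ : Summable fun j => ‖ψ j‖ ^ p)
    (hKQ : ∀ x ∈ K, ∃ z : ℕ → ℂ, (∀ j, ‖z j‖ ≤ 1) ∧ HasSum (fun j => z j • ψ j) x) :
    Summable fun n : ℕ =>
      ((n + 1 : ℝ) ^ (1 / p - 1) * kolWidth (n + 1) (u '' K)) ^ p / (n + 1) := by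
  exact kolWidth_summability_of_lp_box_general hO hu hK hKO hp0 hp1 hψ hKQ
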